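/- Let V ⊆ Π be a linear subspace with Σ ⊆ V, Q(V^r) ⊆ V^m and P(V^m) ⊆ V^n. If H(V) is finite dimensional, then H(Σ) is finite dimensional and dim H(V) ≥ ∑_{i∈ι} dim(ker P̂ i / ran Q̂ i). -/

import Mathlib

noncomputable section

open Submodule

variable {ι : Type*}

/-- The submodule of finitely supported families in a product of `ℂ`-modules. -/
def finSupp (F : ι → Type*) [∀ i, AddCommGroup (F i)] [∀ i, Module ℂ (F i)] :
    Submodule ℂ (∀ i, F i) where
  carrier := {a | {i | a i ≠ 0}.Finite}
  zero_mem' := by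
    simp
  add_mem' := by
    intro a b ha hb
    refine (ha.union hb).subset fun i hi => ?_
    simp only [Set.mem_setOf_eq, Set.mem_union] at hi ⊢
    by_contra h
    push_neg at h
    exact hi (by simp [h.1, h.2])
  smul_mem' := by
    intro c a ha
    refine ha.subset fun i hi => ?_
    simp only [Set.mem_setOf_eq] at hi ⊢
    intro h
    exact hi (by simp [h])

/-- The componentwise linear map induced by a family of linear maps. -/
def pwMap {F G : ι → Type*} [∀ i, AddCommGroup (F i)] [∀ i, Module ℂ (F i)]
    [∀ i, AddCommGroup (G i)] [∀ i, Module ℂ (G i)]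
    (T : ∀ i, F i →ₗ[ℂ] G i) : (∀ i, F i) →ₗ[ℂ] (∀ i, G i) where
  toFun u i := T i (u i)
  map_add' u v := by funext i; simp
  map_smul' c u := by funext i; simp

@[simp] theorem pwMap_apply {F G : ι → Type*} [∀ i, AddCommGroup (F i)] [∀ i, Module ℂ (F i)]
    [∀ i, AddCommGroup (G i)] [∀ i, Module ℂ (G i)]
    (T : ∀ i, F i →ₗ[ℂ] G i) (u : ∀ i, F i) (i : ι) : pwMap T u i = T i (u i) := rfl

/-- The `k`-th power `V^k` of a subspace `V ⊆ Π`, inside `∏ i, (E i)^k`. -/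
def Vpow {E : ι → Type*} [∀ i, AddCommGroup (E i)] [∀ i, Module ℂ (E i)]
    (V : Submodule ℂ (∀ i, E i)) (k : ℕ) : Submodule ℂ (∀ i, Fin k → E i) where
  carrier := {u | ∀ j : Fin k, (fun i => u i j) ∈ V}
  zero_mem' := fun _ => V.zero_mem
  add_mem' := fun ha hb j => V.add_mem (ha j) (hb j)
  smul_mem' := fun c _a ha j => V.smul_mem c (ha j)

theorem Vpow_mono {E : ι → Type*} [∀ i, AddCommGroup (E i)] [∀ i, Module ℂ (E i)]
    {V W : Submodule ℂ (∀ i, E i)} (h : V ≤ W) (k : ℕ) : Vpow V k ≤ Vpow W k :=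
  fun _ hu j => h (hu j)

section Coh

variable {E : ι → Type*} [∀ i, AddCommGroup (E i)] [∀ i, Module ℂ (E i)] {r m n : ℕ}

/-- The local cohomology space `ker P̂ i / ran Q̂ i`. -/
abbrev locCoh (Qh : ∀ i, (Fin r → E i) →ₗ[ℂ] (Fin m → E i))
    (Ph : ∀ i, (Fin m → E i) →ₗ[ℂ] (Fin n → E i)) (i : ι) : Type _ :=
  ↥(LinearMap.ker (Ph i)) ⧸
    ((LinearMap.range (Qh i)).comap (LinearMap.ker (Ph i)).subtype)

/-- `ker (P : V^m → V^n)` as a submodule of `Π^m`. -/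
abbrev cohKer (Ph : ∀ i, (Fin m → E i) →ₗ[ℂ] (Fin n → E i))
    (V : Submodule ℂ (∀ i, E i)) : Submodule ℂ (∀ i, Fin m → E i) :=
  Vpow V m ⊓ LinearMap.ker (pwMap Ph)

/-- `ran (Q : V^r → V^m)` as a submodule of `Π^m`. -/
abbrev cohRan (Qh : ∀ i, (Fin r → E i) →ₗ[ℂ] (Fin m → E i))
    (V : Submodule ℂ (∀ i, E i)) : Submodule ℂ (∀ i, Fin m → E i) :=
  (Vpow V r).map (pwMap Qh)

/-- The cohomology `H(V) = ker (P : V^m → V^n) / ran (Q : V^r → V^m)`. -/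
abbrev coh (Qh : ∀ i, (Fin r → E i) →ₗ[ℂ] (Fin m → E i))
    (Ph : ∀ i, (Fin m → E i) →ₗ[ℂ] (Fin n → E i))
    (V : Submodule ℂ (∀ i, E i)) : Type _ :=
  ↥(cohKer Ph V) ⧸ ((cohRan Qh V).comap (cohKer Ph V).subtype)

theorem kerMem (Ph : ∀ i, (Fin m → E i) →ₗ[ℂ] (Fin n → E i))
    {V : Submodule ℂ (∀ i, E i)} (a : ↥(cohKer Ph V)) (i : ι) :
    (a : ∀ j, Fin m → E j) i ∈ LinearMap.ker (Ph i) := by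
  have h : pwMap Ph (a : ∀ j, Fin m → E j) = 0 :=
    LinearMap.mem_ker.mp (Submodule.mem_inf.mp a.2).2
  exact LinearMap.mem_ker.mpr (by simpa using congrFun h i)

/-- The map `H(V) → H(W)` induced by an inclusion `V ⊆ W`. -/
def cohMap (Qh : ∀ i, (Fin r → E i) →ₗ[ℂ] (Fin m → E i))
    (Ph : ∀ i, (Fin m → E i) →ₗ[ℂ] (Fin n → E i))
    {V W : Submodule ℂ (∀ i, E i)} (h : V ≤ W) :
    coh Qh Ph V →ₗ[ℂ] coh Qh Ph W :=
  Submodule.mapQ _ _ (Submodule.inclusion (inf_le_inf_right _ (Vpow_mono h m)))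
    (by
      intro x hx
      simp only [Submodule.mem_comap] at hx ⊢
      exact Submodule.map_mono (Vpow_mono h r) hx)

end Coh

/-
A cocycle in `Σ^m` is a coboundary as soon as each of its components lies in `ran Q̂ i`: primitives
may be chosen one index at a time, and equal to zero wherever the cocycle vanishes. Localization
therefore identifies `H(Σ)` with `⊕ i, ker P̂ i / ran Q̂ i`. As localization on `H(Σ)` factors
through `H(V)`, the map `H(Σ) → H(V)` is injective, and comparing dimensions gives the result.
-/

section FinSupp

variable {F G : ι → Type*} [∀ i, AddCommGroup (F i)] [∀ i, Module ℂ (F i)]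
  [∀ i, AddCommGroup (G i)] [∀ i, Module ℂ (G i)]

theorem mem_finSupp_of_forall_notMem {s : Set ι} (hs : s.Finite) {a : ∀ i, F i}
    (ha : ∀ i ∉ s, a i = 0) : a ∈ finSupp F :=
  hs.subset fun i hi => by_contra fun his => hi (ha i his)

theorem pwMap_mem_finSupp (T : ∀ i, F i →ₗ[ℂ] G i) {a : ∀ i, F i} (ha : a ∈ finSupp F) :
    pwMap T a ∈ finSupp G :=
  mem_finSupp_of_forall_notMem ha fun i hi => by
    rw [pwMap_apply, of_not_not hi, map_zero]

theorem mem_map_pwMap_finSupp (T : ∀ i, F i →ₗ[ℂ] G i) (u : ∀ i, G i) :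
    u ∈ (finSupp F).map (pwMap T) ↔ u ∈ finSupp G ∧ ∀ i, u i ∈ LinearMap.range (T i) := by
  classical
  constructor
  · rintro ⟨v, hv, rfl⟩
    exact ⟨pwMap_mem_finSupp T hv, fun i => ⟨v i, rfl⟩⟩
  · rintro ⟨hu, hrange⟩
    choose v hv using hrange
    refine ⟨fun i => if u i = 0 then 0 else v i,
      mem_finSupp_of_forall_notMem hu fun i hi => if_pos (of_not_not hi), ?_⟩
    funext i
    by_cases hi : u i = 0 <;> simp [hi, hv]

theorem Vpow_finSupp (k : ℕ) : Vpow (finSupp F) k = finSupp fun i => Fin k → F i := by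
  ext u
  constructor
  · intro hu
    refine mem_finSupp_of_forall_notMem (Set.finite_iUnion hu) fun i hi => funext fun j => ?_
    exact of_not_not fun hij => hi (Set.mem_iUnion.mpr ⟨j, hij⟩)
  · intro hu j
    exact mem_finSupp_of_forall_notMem hu fun i hi => congrFun (of_not_not hi) j

theorem exists_mem_finSupp_restrict_eq (s : Finset ι) (y : ∀ i : s, F i) :
    ∃ a ∈ finSupp F, ∀ i : s, a i = y i := by
  classical
  exact ⟨fun i => if hi : i ∈ s then y ⟨i, hi⟩ else 0,
    mem_finSupp_of_forall_notMem s.finite_toSet fun i hi => dif_neg hi, fun i => dif_pos i.2⟩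

theorem finSupp_eval_surjective (i : ι) :
    Function.Surjective ((LinearMap.proj i).comp (finSupp F).subtype : finSupp F →ₗ[ℂ] F i) := by
  classical
  intro x
  exact ⟨⟨Pi.single i x, mem_finSupp_of_forall_notMem (Set.finite_singleton i)
    fun j hj => Pi.single_eq_of_ne hj x⟩, Pi.single_eq_same i x⟩

theorem moduleFinite_of_moduleFinite_finSupp [Module.Finite ℂ (finSupp F)] (i : ι) :
    Module.Finite ℂ (F i) :=
  Module.Finite.of_surjective _ (finSupp_eval_surjective i)

variable (F) in
theorem finite_setOf_nontrivial_of_moduleFinite_finSupp [Module.Finite ℂ (finSupp F)] :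
    {i | Nontrivial (F i)}.Finite := by
  obtain ⟨S, hS⟩ := Module.Finite.iff_fg.mp ‹Module.Finite ℂ (finSupp F)›
  have supports_finite : (⋃ a ∈ S, {i | a i ≠ 0}).Finite :=
    S.finite_toSet.biUnion fun a ha => (hS ▸ subset_span ha : a ∈ finSupp F)
  refine supports_finite.subset fun i (hi : Nontrivial (F i)) => ?_
  by_contra hi_supports
  have hspan : finSupp F ≤ LinearMap.ker (LinearMap.proj i) := by
    rw [← hS, span_le]
    intro a ha
    by_contra hai
    exact hi_supports (Set.mem_biUnion ha hai)
  obtain ⟨x, hx⟩ := exists_ne (0 : F i)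
  obtain ⟨a, rfl⟩ := finSupp_eval_surjective i x
  exact hx (hspan a.2)

variable (F) in
theorem finrank_finSupp [Module.Finite ℂ (finSupp F)] :
    Module.finrank ℂ (finSupp F) = ∑ᶠ i, Module.finrank ℂ (F i) := by
  have hs := finite_setOf_nontrivial_of_moduleFinite_finSupp F
  have (i : ι) : Module.Finite ℂ (F i) := moduleFinite_of_moduleFinite_finSupp i
  let restrict : finSupp F →ₗ[ℂ] ∀ i : hs.toFinset, F i :=
    LinearMap.pi fun i => (LinearMap.proj (i : ι)).comp (finSupp F).subtype
  have restrict_injective : Function.Injective restrict := by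
    intro a b hab
    ext i
    by_cases hi : Nontrivial (F i)
    · exact congrFun hab ⟨i, hs.mem_toFinset.mpr hi⟩
    · have := not_nontrivial_iff_subsingleton.mp hi
      exact Subsingleton.elim _ _
  have restrict_surjective : Function.Surjective restrict := by
    intro y
    obtain ⟨a, ha, hay⟩ := exists_mem_finSupp_restrict_eq hs.toFinset y
    exact ⟨⟨a, ha⟩, funext hay⟩
  have support_subset : (Function.support fun i => Module.finrank ℂ (F i)) ⊆ hs.toFinset :=
    fun i hi => hs.mem_toFinset.mpr (Module.nontrivial_of_finrank_pos (Nat.pos_of_ne_zero hi))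
  rw [(LinearEquiv.ofBijective restrict ⟨restrict_injective, restrict_surjective⟩).finrank_eq,
    Module.finrank_pi_fintype, Finset.sum_coe_sort hs.toFinset fun i => Module.finrank ℂ (F i),
    finsum_eq_sum_of_support_subset _ support_subset]

end FinSupp

section Localization

variable {E : ι → Type*} [∀ i, AddCommGroup (E i)] [∀ i, Module ℂ (E i)] {r m n : ℕ}
  (Qh : ∀ i, (Fin r → E i) →ₗ[ℂ] (Fin m → E i)) (Ph : ∀ i, (Fin m → E i) →ₗ[ℂ] (Fin n → E i))

/-- The localization map `H(V) → ∏ i, ker P̂ i / ran Q̂ i`, sending the class of a cocycle to the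
family of the classes of its components. -/
def cohLocalize (V : Submodule ℂ (∀ i, E i)) : coh Qh Ph V →ₗ[ℂ] ∀ i, locCoh Qh Ph i :=
  LinearMap.pi fun i => Submodule.mapQ _ _
    (((LinearMap.proj i).comp (cohKer Ph V).subtype).codRestrict (LinearMap.ker (Ph i))
      fun a => kerMem Ph a i)
    (by
      rintro a ⟨v, -, hv⟩
      exact ⟨v i, congrFun hv i⟩)

variable {V : Submodule ℂ (∀ i, E i)}

theorem cohLocalize_mk (a : cohKer Ph V) (i : ι) :
    cohLocalize Qh Ph V (Submodule.Quotient.mk a) i =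
      Submodule.Quotient.mk ⟨(a : ∀ j, Fin m → E j) i, kerMem Ph a i⟩ :=
  rfl

theorem cohLocalize_cohMap {W : Submodule ℂ (∀ i, E i)} (h : V ≤ W) (x : coh Qh Ph V) :
    cohLocalize Qh Ph W (cohMap Qh Ph h x) = cohLocalize Qh Ph V x := by
  obtain ⟨a, rfl⟩ := Submodule.Quotient.mk_surjective _ x
  rfl

theorem cohLocalize_mk_eq_zero_iff (a : cohKer Ph V) :
    cohLocalize Qh Ph V (Submodule.Quotient.mk a) = 0 ↔
      ∀ i, (a : ∀ j, Fin m → E j) i ∈ LinearMap.range (Qh i) := by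
  simp only [funext_iff, cohLocalize_mk, Pi.zero_apply, Submodule.Quotient.mk_eq_zero, mem_comap,
    subtype_apply]

theorem cohKer_finSupp_le : cohKer Ph (finSupp E) ≤ finSupp fun i => Fin m → E i :=
  inf_le_left.trans (Vpow_finSupp m).le

theorem cohLocalize_finSupp_injective : Function.Injective (cohLocalize Qh Ph (finSupp E)) := by
  rw [injective_iff_map_eq_zero]
  intro x hx
  obtain ⟨a, rfl⟩ := Submodule.Quotient.mk_surjective _ x
  rw [Submodule.Quotient.mk_eq_zero, mem_comap, subtype_apply, cohRan, Vpow_finSupp,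
    mem_map_pwMap_finSupp]
  exact ⟨cohKer_finSupp_le Ph a.2, (cohLocalize_mk_eq_zero_iff Qh Ph a).mp hx⟩

theorem cohMap_finSupp_injective (hV : finSupp E ≤ V) : Function.Injective (cohMap Qh Ph hV) := by
  refine Function.Injective.of_comp (f := cohLocalize Qh Ph V) ?_
  convert cohLocalize_finSupp_injective Qh Ph using 1
  exact funext (cohLocalize_cohMap Qh Ph hV)

theorem range_cohLocalize_finSupp :
    LinearMap.range (cohLocalize Qh Ph (finSupp E)) = finSupp (locCoh Qh Ph) := by
  apply le_antisymm
  · rintro _ ⟨x, rfl⟩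
    obtain ⟨a, rfl⟩ := Submodule.Quotient.mk_surjective _ x
    refine mem_finSupp_of_forall_notMem (cohKer_finSupp_le Ph a.2) fun i hi => ?_
    rw [cohLocalize_mk, Submodule.Quotient.mk_eq_zero]
    exact ⟨0, (map_zero _).trans (of_not_not hi).symm⟩
  · intro y hy
    obtain ⟨b, hb, rfl⟩ : y ∈ (finSupp fun i => LinearMap.ker (Ph i)).map
        (pwMap fun i => mkQ ((LinearMap.range (Qh i)).comap (LinearMap.ker (Ph i)).subtype)) :=
      (mem_map_pwMap_finSupp _ y).mpr ⟨hy, fun i => mkQ_surjective _ (y i)⟩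
    have hker : pwMap (fun i => (LinearMap.ker (Ph i)).subtype) b ∈ cohKer Ph (finSupp E) := by
      rw [cohKer, Vpow_finSupp]
      exact ⟨pwMap_mem_finSupp _ hb, LinearMap.mem_ker.mpr (funext fun i => (b i).2)⟩
    exact ⟨Submodule.Quotient.mk ⟨_, hker⟩, rfl⟩

/-- The isomorphism `H(Σ) ≃ ⊕ i, ker P̂ i / ran Q̂ i` given by localization, with the direct sum
realized as the finitely supported families. -/
def cohFinSuppEquiv : coh Qh Ph (finSupp E) ≃ₗ[ℂ] finSupp (locCoh Qh Ph) :=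
  (LinearEquiv.ofInjective _ (cohLocalize_finSupp_injective Qh Ph)).trans
    (LinearEquiv.ofEq _ _ (range_cohLocalize_finSupp Qh Ph))

end Localization

-- The second and third conjuncts exclude the junk value `0` that `finrank` takes on an
-- infinite-dimensional space and `∑ᶠ` on a family of infinite support.
theorem statement_4_general {E : ι → Type*} [∀ i, AddCommGroup (E i)] [∀ i, Module ℂ (E i)]
    {r m n : ℕ} (Qh : ∀ i, (Fin r → E i) →ₗ[ℂ] (Fin m → E i))
    (Ph : ∀ i, (Fin m → E i) →ₗ[ℂ] (Fin n → E i))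
    {V : Submodule ℂ (∀ i, E i)} (hV : finSupp E ≤ V) [FiniteDimensional ℂ (coh Qh Ph V)] :
    FiniteDimensional ℂ (coh Qh Ph (finSupp E)) ∧
      (∀ i, FiniteDimensional ℂ (locCoh Qh Ph i)) ∧
      {i | Nontrivial (locCoh Qh Ph i)}.Finite ∧
      ∑ᶠ i, Module.finrank ℂ (locCoh Qh Ph i) ≤ Module.finrank ℂ (coh Qh Ph V) := by
  have hinj := cohMap_finSupp_injective Qh Ph hV
  have hfin : FiniteDimensional ℂ (coh Qh Ph (finSupp E)) := FiniteDimensional.of_injective _ hinj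
  have : Module.Finite ℂ (finSupp (locCoh Qh Ph)) :=
    Module.Finite.equiv (cohFinSuppEquiv Qh Ph)
  refine ⟨hfin, moduleFinite_of_moduleFinite_finSupp,
    finite_setOf_nontrivial_of_moduleFinite_finSupp _, ?_⟩
  calc ∑ᶠ i, Module.finrank ℂ (locCoh Qh Ph i)
      = Module.finrank ℂ (finSupp (locCoh Qh Ph)) := (finrank_finSupp (locCoh Qh Ph)).symm
    _ = Module.finrank ℂ (coh Qh Ph (finSupp E)) := (cohFinSuppEquiv Qh Ph).finrank_eq.symm
    _ ≤ Module.finrank ℂ (coh Qh Ph V) := LinearMap.finrank_le_finrank_of_injective hinj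

theorem statement_4 {ι : Type*} [Countable ι] (E : ι → Type*)
    [∀ i, NormedAddCommGroup (E i)] [∀ i, InnerProductSpace ℂ (E i)]
    [∀ i, FiniteDimensional ℂ (E i)] (r m n : ℕ)
    (Qh : ∀ i, (Fin r → E i) →ₗ[ℂ] (Fin m → E i))
    (Ph : ∀ i, (Fin m → E i) →ₗ[ℂ] (Fin n → E i))
    (hPQ : ∀ i, (Ph i).comp (Qh i) = 0)
    (V : Submodule ℂ (∀ i, E i)) (hSigmaV : finSupp E ≤ V)
    (hQ : (Vpow V r).map (pwMap Qh) ≤ Vpow V m)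
    (hP : (Vpow V m).map (pwMap Ph) ≤ Vpow V n)
    (hfin : FiniteDimensional ℂ (coh Qh Ph V)) :
    FiniteDimensional ℂ (coh Qh Ph (finSupp E)) ∧
      ∑ᶠ i, Module.finrank ℂ (locCoh Qh Ph i) ≤ Module.finrank ℂ (coh Qh Ph V) := by
  obtain ⟨hSigma, -, -, hle⟩ := statement_4_general Qh Ph hSigmaV
  exact ⟨hSigma, hle⟩
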